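/- For the map Π(x) = (1 + c(x^{−2} − 1))^{−1/2} with c ∈ (0,1), the iterates Πⁿ(x₀) converge monotonically to 1 for every x₀ > 0. -/

import Mathlib

open Filter

/-!
`Π(x)` is the power mean with exponent `-2` of `1` and `x`, with weights `1 - c` and `c`. For any
exponent `p ≠ 0`, the substitution `u = x ^ p` turns such a mean into the homothety
`u ↦ 1 + c (u - 1)`, so the means with weights `c` and `d` compose to the mean with weight `c * d`,
and the `n`-th iterate is the mean with weight `c ^ n`. Since `c ^ n` decreases to `0`, all that
remains is how a power mean depends on its weight.
-/

/-- The weighted power mean, with exponent `p`, of `1` and `x`, with weights `1 - c` and `c`. The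
map `Π` is `powerMeanOne (-2) c`. The weight `1 - c` is absorbed by writing `(1 - c) + c * x ^ p` as
`1 + c * (x ^ p - 1)`. -/
noncomputable def powerMeanOne (p c x : ℝ) : ℝ :=
  (1 + c * (x ^ p - 1)) ^ p⁻¹

section PowerMean

variable {p c d x : ℝ}

lemma one_add_mul_sub_one_pos {u : ℝ} (hc : c ∈ Set.Icc 0 1) (hu : 0 < u) :
    0 < 1 + c * (u - 1) := by
  simpa using (convex_Ioi (0 : ℝ)).add_smul_sub_mem (Set.mem_Ioi.2 one_pos) (Set.mem_Ioi.2 hu) hc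

lemma powerMeanOne_pos (hc : c ∈ Set.Icc 0 1) (hx : 0 < x) : 0 < powerMeanOne p c x :=
  Real.rpow_pos_of_pos (one_add_mul_sub_one_pos hc (Real.rpow_pos_of_pos hx p)) _

lemma powerMeanOne_rpow (hp : p ≠ 0) (hc : c ∈ Set.Icc 0 1) (hx : 0 < x) :
    powerMeanOne p c x ^ p = 1 + c * (x ^ p - 1) :=
  Real.rpow_inv_rpow (one_add_mul_sub_one_pos hc (Real.rpow_pos_of_pos hx p)).le hp

lemma powerMeanOne_one_left (hp : p ≠ 0) (hx : 0 ≤ x) : powerMeanOne p 1 x = x := by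
  simp [powerMeanOne, Real.rpow_rpow_inv hx hp]

lemma powerMeanOne_powerMeanOne (hp : p ≠ 0) (hd : d ∈ Set.Icc 0 1) (hx : 0 < x) :
    powerMeanOne p c (powerMeanOne p d x) = powerMeanOne p (c * d) x := by
  rw [powerMeanOne, powerMeanOne_rpow hp hd hx, add_sub_cancel_left, ← mul_assoc, powerMeanOne]

lemma iterate_powerMeanOne (hp : p ≠ 0) (hc : c ∈ Set.Icc 0 1) (hx : 0 < x) (n : ℕ) :
    (powerMeanOne p c)^[n] x = powerMeanOne p (c ^ n) x := by
  induction n with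
  | zero => simp [powerMeanOne_one_left hp hx.le]
  | succ n ih =>
    have hcn : c ^ n ∈ Set.Icc 0 1 := ⟨pow_nonneg hc.1 n, pow_le_one₀ hc.1 hc.2⟩
    rw [Function.iterate_succ_apply', ih, powerMeanOne_powerMeanOne hp hcn hx, ← pow_succ']

lemma powerMeanOne_neg_inv (hc : c ∈ Set.Icc 0 1) (hx : 0 < x) :
    powerMeanOne (-p) c x⁻¹ = (powerMeanOne p c x)⁻¹ := by
  have hbase := one_add_mul_sub_one_pos hc (Real.rpow_pos_of_pos hx p)
  rw [powerMeanOne, Real.rpow_neg_eq_inv_rpow, inv_inv, inv_neg, Real.rpow_neg hbase.le,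
    powerMeanOne]

lemma tendsto_powerMeanOne_nhds_zero (p x : ℝ) :
    Tendsto (fun c ↦ powerMeanOne p c x) (nhds 0) (nhds 1) := by
  have hbase : Continuous fun c : ℝ ↦ 1 + c * (x ^ p - 1) := by fun_prop
  have hmean : ContinuousAt (fun c ↦ powerMeanOne p c x) 0 :=
    hbase.continuousAt.rpow_const (Or.inl (by simp))
  simpa [powerMeanOne] using hmean.tendsto

lemma antitoneOn_powerMeanOne_weight (hx : 0 < x) (hx1 : x ≤ 1) :
    AntitoneOn (fun c ↦ powerMeanOne p c x) (Set.Icc 0 1) := by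
  intro c hc d hd hcd
  have hbase {a : ℝ} (ha : a ∈ Set.Icc 0 1) : 0 < 1 + a * (x ^ p - 1) :=
    one_add_mul_sub_one_pos ha (Real.rpow_pos_of_pos hx p)
  rcases le_total 0 p with hp | hp
  · have hxp : x ^ p - 1 ≤ 0 := sub_nonpos.2 (Real.rpow_le_one hx.le hx1 hp)
    have hle : 1 + d * (x ^ p - 1) ≤ 1 + c * (x ^ p - 1) :=
      add_le_add_right (mul_le_mul_of_nonpos_right hcd hxp) 1
    exact Real.rpow_le_rpow (hbase hd).le hle (inv_nonneg.2 hp)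
  · have hxp : 0 ≤ x ^ p - 1 :=
      sub_nonneg.2 (Real.one_le_rpow_of_pos_of_le_one_of_nonpos hx hx1 hp)
    have hle : 1 + c * (x ^ p - 1) ≤ 1 + d * (x ^ p - 1) :=
      add_le_add_right (mul_le_mul_of_nonneg_right hcd hxp) 1
    exact Real.rpow_le_rpow_of_nonpos (hbase hc) hle (inv_nonpos.2 hp)

lemma monotoneOn_powerMeanOne_weight (hx1 : 1 ≤ x) :
    MonotoneOn (fun c ↦ powerMeanOne p c x) (Set.Icc 0 1) := by
  intro c hc d hd hcd
  have hx : 0 < x := one_pos.trans_le hx1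
  have hinv : powerMeanOne (-p) d x⁻¹ ≤ powerMeanOne (-p) c x⁻¹ :=
    antitoneOn_powerMeanOne_weight (inv_pos.2 hx) (inv_le_one_of_one_le₀ hx1) hc hd hcd
  rw [powerMeanOne_neg_inv hd hx, powerMeanOne_neg_inv hc hx] at hinv
  exact (inv_le_inv₀ (powerMeanOne_pos hd hx) (powerMeanOne_pos hc hx)).1 hinv

lemma powerMeanOne_neg_two (c : ℝ) :
    powerMeanOne (-2) c = fun x ↦ (1 + c * ((x ^ 2)⁻¹ - 1)) ^ (-(1 / 2) : ℝ) := by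
  funext x
  -- An integer exponent, because `Real.rpow_neg` would need `0 ≤ x`.
  have hpow : x ^ (-2 : ℝ) = (x ^ 2)⁻¹ := by
    exact_mod_cast Real.rpow_intCast x (-2)
  rw [powerMeanOne, hpow, inv_neg, one_div]

end PowerMean

theorem hopf_map_monotone_convergence_general {p c x₀ : ℝ} (hp : p ≠ 0) (hc : c ∈ Set.Ico 0 1)
    (hx₀ : 0 < x₀) :
    Tendsto (fun n : ℕ ↦ (powerMeanOne p c)^[n] x₀) atTop (nhds 1) ∧
      (x₀ ≤ 1 → Monotone fun n : ℕ ↦ (powerMeanOne p c)^[n] x₀) ∧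
      (1 ≤ x₀ → Antitone fun n : ℕ ↦ (powerMeanOne p c)^[n] x₀) := by
  obtain ⟨hc0, hc1⟩ := hc
  have hmem (n : ℕ) : c ^ n ∈ Set.Icc 0 1 := ⟨pow_nonneg hc0 n, pow_le_one₀ hc0 hc1.le⟩
  have hanti : Antitone (c ^ · : ℕ → ℝ) := pow_right_anti₀ hc0 hc1.le
  simp only [iterate_powerMeanOne hp ⟨hc0, hc1.le⟩ hx₀]
  refine ⟨?_, fun hle m n hmn ↦ ?_, fun hge m n hmn ↦ ?_⟩
  · exact (tendsto_powerMeanOne_nhds_zero p x₀).comp (tendsto_pow_atTop_nhds_zero_of_lt_one hc0 hc1)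
  · exact antitoneOn_powerMeanOne_weight hx₀ hle (hmem n) (hmem m) (hanti hmn)
  · exact monotoneOn_powerMeanOne_weight hge (hmem n) (hmem m) (hanti hmn)

/-- For the map `P(x) = (1 + c(x⁻² − 1))^{−1/2}` with `c ∈ (0,1)`, the iterates
from any `x₀ > 0` converge monotonically to `1`. -/
theorem hopf_map_monotone_convergence (c : ℝ) (hc : c ∈ Set.Ioo (0 : ℝ) 1) :
    let P : ℝ → ℝ := fun x => (1 + c * ((x ^ 2)⁻¹ - 1)) ^ (-(1 / 2) : ℝ)
    ∀ x₀ : ℝ, 0 < x₀ →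
      Tendsto (fun n : ℕ => P^[n] x₀) atTop (nhds 1) ∧
      (x₀ ≤ 1 → Monotone fun n : ℕ => P^[n] x₀) ∧
      (1 ≤ x₀ → Antitone fun n : ℕ => P^[n] x₀) := by
  intro P x₀ hx₀
  have hP : P = powerMeanOne (-2) c := (powerMeanOne_neg_two c).symm
  exact hP ▸ hopf_map_monotone_convergence_general (by norm_num) (Set.Ioo_subset_Ico_self hc) hx₀
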